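/- Let λ > 0, ε > 0, V ≠ 0 and s ∈ ℝ. Define u : ℝ × ℝ → ℝ by u(x,t) = V − 1 − (3ε²/(25λV)) · (tanh²(ε(x + s − Vt)/(10λV)) + 2 tanh(ε(x + s − Vt)/(10λV)) − 1). Then u satisfies the generalized BBM equation u_t + u_x + u u_x − λ u_{xxt} − ε u_{xx} = 0 at every point (x,t) ∈ ℝ × ℝ. -/

import Mathlib

/-!
On a wave `u(x, t) = φ(x + s - V t)` the equation is an exact derivative: it integrates once to
`λ V φ'' - ε φ' + (φ - (V - 1))² / 2 = C`. If `f' = k (1 - f²)`, which `tanh (k ·)` satisfies, then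
for a quadratic polynomial `φ` in `f` the left side is a polynomial in `f`. The coefficient of `f⁴`
forces the leading coefficient `-12 λ V k²` of `φ`, and the lower ones can then be made to vanish
when `ε = 10 λ V k`.
-/

/-- The generalized BBM equation `u_t + u_x + u u_x - λ u_{xxt} - ε u_{xx} = 0` on the whole plane.
The partial derivatives are values of `deriv`, so each one is `0` where it does not exist. -/
def IsGBBMSolution (lam eps : ℝ) (u : ℝ → ℝ → ℝ) : Prop :=
  ∀ x t : ℝ,
    deriv (fun τ => u x τ) t
    + deriv (fun y => u y t) x
    + u x t * deriv (fun y => u y t) x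
    - lam * deriv (fun τ => deriv (fun y => deriv (fun z => u z τ) y) x) t
    - eps * deriv (fun y => deriv (fun z => u z t) y) x = 0

/-- The wave profile `c - 12 μ k² (f² + 2 f - 1)` of a solution `f` of the Riccati equation
`f' = k (1 - f²)`. For the gBBM equation with wave speed `V`, `c = V - 1` and `μ = λ V`. -/
def riccatiProfile (c μ k : ℝ) (f : ℝ → ℝ) (ξ : ℝ) : ℝ :=
  c - 12 * μ * k ^ 2 * (f ξ ^ 2 + 2 * f ξ - 1)

section TravellingWave

theorem deriv_comp_const_sub_mul {𝕜 F : Type*} [NontriviallyNormedField 𝕜]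
    [NormedAddCommGroup F] [NormedSpace 𝕜 F] (f : 𝕜 → F) (a c t : 𝕜) :
    deriv (fun τ => f (a - c * τ)) t = -(c • deriv f (a - c * t)) := by
  rw [deriv_comp_mul_left c (fun y => f (a - y)) t, deriv_comp_const_sub, smul_neg]

variable {lam eps V : ℝ} {φ : ℝ → ℝ}

theorem isGBBMSolution_travellingWave
    (hφ : ∀ ξ, lam * V * deriv (deriv (deriv φ)) ξ - eps * deriv (deriv φ) ξ
      + (φ ξ - (V - 1)) * deriv φ ξ = 0) (s : ℝ) :
    IsGBBMSolution lam eps fun x t => φ (x + s - V * t) := by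
  intro x t
  have deriv_space (g : ℝ → ℝ) (y τ : ℝ) :
      deriv (fun z => g (z + s - V * τ)) y = deriv g (y + s - V * τ) := by
    simp only [add_sub_assoc, deriv_comp_add_const]
  simp only [deriv_space, deriv_comp_const_sub_mul, smul_eq_mul]
  linear_combination hφ (x + s - V * t)

theorem isGBBMSolution_travellingWave_of_firstIntegral {C : ℝ} (hφ : Differentiable ℝ φ)
    (hφ' : Differentiable ℝ (deriv φ))
    (hC : ∀ ξ, lam * V * deriv (deriv φ) ξ - eps * deriv φ ξ + (φ ξ - (V - 1)) ^ 2 / 2 = C)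
    (s : ℝ) : IsGBBMSolution lam eps fun x t => φ (x + s - V * t) := by
  refine isGBBMSolution_travellingWave (fun ξ => ?_) s
  have second_deriv_eq : (fun ξ => lam * V * deriv (deriv φ) ξ)
      = fun ξ => C + eps * deriv φ ξ - (φ ξ - (V - 1)) ^ 2 / 2 := by
    funext η
    linear_combination hC η
  have third_deriv_eq : lam * V * deriv (deriv (deriv φ)) ξ
      = eps * deriv (deriv φ) ξ - (φ ξ - (V - 1)) * deriv φ ξ := by
    rw [← deriv_const_mul_field, second_deriv_eq]
    have h := (((hφ' ξ).hasDerivAt.const_mul eps).const_add C).sub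
      ((((hφ ξ).hasDerivAt.sub_const (V - 1)).pow 2).div_const 2)
    exact (h.congr_deriv (by push_cast; ring)).deriv
  linear_combination third_deriv_eq

end TravellingWave

section RiccatiProfile

variable {f : ℝ → ℝ} {k : ℝ} (c μ : ℝ)

theorem hasDerivAt_riccatiProfile {ξ : ℝ} (hf : HasDerivAt f (k * (1 - f ξ ^ 2)) ξ) :
    HasDerivAt (riccatiProfile c μ k f)
      (-24 * μ * k ^ 3 * ((1 + f ξ) * (1 - f ξ ^ 2))) ξ := by
  have h := ((((hf.pow 2).add (hf.const_mul 2)).sub_const 1).const_mul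
    (12 * μ * k ^ 2)).const_sub c
  exact h.congr_deriv (by push_cast; ring)

theorem hasDerivAt_deriv_riccatiProfile (hf : ∀ ξ, HasDerivAt f (k * (1 - f ξ ^ 2)) ξ) (ξ : ℝ) :
    HasDerivAt (deriv (riccatiProfile c μ k f))
      (-24 * μ * k ^ 4 * ((1 - 3 * f ξ) * (1 + f ξ) * (1 - f ξ ^ 2))) ξ := by
  rw [funext fun η => (hasDerivAt_riccatiProfile c μ (hf η)).deriv]
  have h := (((hf ξ).const_add 1).fun_mul (((hf ξ).fun_pow 2).const_sub 1)).const_mul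
    (-24 * μ * k ^ 3)
  exact h.congr_deriv (by push_cast; ring)

theorem riccatiProfile_firstIntegral (hf : ∀ ξ, HasDerivAt f (k * (1 - f ξ ^ 2)) ξ) (ξ : ℝ) :
    μ * deriv (deriv (riccatiProfile c μ k f)) ξ
      - 10 * μ * k * deriv (riccatiProfile c μ k f) ξ
      + (riccatiProfile c μ k f ξ - c) ^ 2 / 2 = 288 * μ ^ 2 * k ^ 4 := by
  rw [(hasDerivAt_deriv_riccatiProfile c μ hf ξ).deriv,
    (hasDerivAt_riccatiProfile c μ (hf ξ)).deriv, riccatiProfile]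
  ring

theorem isGBBMSolution_riccatiProfile (hf : ∀ ξ, HasDerivAt f (k * (1 - f ξ ^ 2)) ξ)
    (lam V s : ℝ) :
    IsGBBMSolution lam (10 * (lam * V) * k) fun x t =>
      riccatiProfile (V - 1) (lam * V) k f (x + s - V * t) :=
  isGBBMSolution_travellingWave_of_firstIntegral
    (fun ξ => (hasDerivAt_riccatiProfile _ _ (hf ξ)).differentiableAt)
    (fun ξ => (hasDerivAt_deriv_riccatiProfile _ _ hf ξ).differentiableAt)
    (riccatiProfile_firstIntegral _ _ hf) s

end RiccatiProfile

theorem hasDerivAt_tanh (x : ℝ) : HasDerivAt Real.tanh (1 - Real.tanh x ^ 2) x := by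
  have hcosh : Real.cosh x ≠ 0 := (Real.cosh_pos x).ne'
  have h := (Real.hasDerivAt_sinh x).div (Real.hasDerivAt_cosh x) hcosh
  rw [show Real.tanh = Real.sinh / Real.cosh from funext Real.tanh_eq_sinh_div_cosh]
  exact h.congr_deriv (by simp only [Pi.div_apply]; field_simp)

theorem hasDerivAt_tanh_const_mul (k ξ : ℝ) :
    HasDerivAt (fun η => Real.tanh (k * η)) (k * (1 - Real.tanh (k * ξ) ^ 2)) ξ :=
  ((hasDerivAt_tanh (k * ξ)).comp ξ (hasDerivAt_const_mul k)).congr_deriv (mul_comm _ _)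

/-- the explicit travelling wave
`u(x,t) = V − 1 − (3ε²/(25λV))(tanh²(ε(x+s−Vt)/(10λV)) + 2 tanh(ε(x+s−Vt)/(10λV)) − 1)`
satisfies the generalized BBM equation `u_t + u_x + u u_x − λ u_{xxt} − ε u_{xx} = 0`
at every point `(x,t)`. -/
theorem gBBM_explicit_solution (lam eps V s : ℝ) (hlam : 0 < lam) (heps : 0 < eps)
    (hV : V ≠ 0) (u : ℝ → ℝ → ℝ)
    (hu : ∀ x t : ℝ, u x t = V - 1 - (3 * eps ^ 2 / (25 * lam * V)) *
      (Real.tanh (eps * (x + s - V * t) / (10 * lam * V)) ^ 2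
        + 2 * Real.tanh (eps * (x + s - V * t) / (10 * lam * V)) - 1)) :
    ∀ x t : ℝ,
      deriv (fun τ => u x τ) t
      + deriv (fun y => u y t) x
      + u x t * deriv (fun y => u y t) x
      - lam * deriv (fun τ => deriv (fun y => deriv (fun z => u z τ) y) x) t
      - eps * deriv (fun y => deriv (fun z => u z t) y) x = 0 := by
  have u_eq_wave : u = fun x t => riccatiProfile (V - 1) (lam * V) (eps / (10 * lam * V))
      (fun ξ => Real.tanh (eps / (10 * lam * V) * ξ)) (x + s - V * t) := by
    funext x t
    have amplitude : 3 * eps ^ 2 / (25 * lam * V)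
        = 12 * (lam * V) * (eps / (10 * lam * V)) ^ 2 := by
      field_simp
      norm_num
    rw [hu, amplitude, mul_div_right_comm, riccatiProfile]
  have eps_eq : 10 * (lam * V) * (eps / (10 * lam * V)) = eps := by
    field_simp
  have wave_solves :=
    isGBBMSolution_riccatiProfile (hasDerivAt_tanh_const_mul (eps / (10 * lam * V))) lam V s
  rwa [eps_eq, ← u_eq_wave] at wave_solves
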